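/- Let σ ∈ K_n and let i ≠ j be indices. Suppose σ(i) separates σ(j) from σ(k) for some index k, and σ(j) separates σ(i) from σ(k′) for some index k′. Then these two separations are of the same type: either both are vertical separations, or both are horizontal separations. -/

import Mathlib

open Equiv

/-- The Manhattan distance between two elements of `Fin n`. -/
def fdist {n : ℕ} (a b : Fin n) : ℕ := ((a : ℤ) - (b : ℤ)).natAbs

/-- A king permutation: no two adjacent positions carry adjacent values. -/
def IsKing {n : ℕ} (σ : Equiv.Perm (Fin n)) : Prop :=
  ∀ i j : Fin n, (j : ℕ) = (i : ℕ) + 1 → fdist (σ i) (σ j) ≠ 1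

/-- Pattern containment `π ⪯ σ`. -/
def Contains {m n : ℕ} (π : Equiv.Perm (Fin m)) (σ : Equiv.Perm (Fin n)) : Prop :=
  ∃ f : Fin m ↪o Fin n, ∀ a b : Fin m, π a < π b ↔ σ (f a) < σ (f b)

/-- Strict pattern containment `π ≺ σ`. -/
def StrictContains {m n : ℕ} (π : Equiv.Perm (Fin m)) (σ : Equiv.Perm (Fin n)) : Prop :=
  Contains π σ ∧ m < n

/-- `nabla σ i` deletes the `i`-th entry of `σ` and standardizes. -/
def nabla {n : ℕ} (σ : Equiv.Perm (Fin (n + 1))) (i : Fin (n + 1)) : Equiv.Perm (Fin n) :=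
  Equiv.removeNone ((finSuccEquiv' i).symm.trans (σ.trans (finSuccEquiv' (σ i))))

/-- `nablaStar σ a` deletes the value `a` from `σ` and standardizes. -/
def nablaStar {n : ℕ} (σ : Equiv.Perm (Fin (n + 1))) (a : Fin (n + 1)) : Equiv.Perm (Fin n) :=
  nabla σ (σ⁻¹ a)

/-- The permutation [2413] (0-based one-line notation [1,3,0,2]). -/
def p2413 : Equiv.Perm (Fin 4) :=
  ⟨![1, 3, 0, 2], ![2, 0, 3, 1], by intro x; fin_cases x <;> rfl, by intro x; fin_cases x <;> rfl⟩

/-- The permutation [3142] (0-based one-line notation [2,0,3,1]). -/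
def p3142 : Equiv.Perm (Fin 4) :=
  ⟨![2, 0, 3, 1], ![1, 3, 0, 2], by intro x; fin_cases x <;> rfl, by intro x; fin_cases x <;> rfl⟩

/-- `σ i` vertically separates `σ j` from `σ k`. -/
def VSep {n : ℕ} (σ : Equiv.Perm (Fin n)) (i j k : Fin n) : Prop :=
  i ≠ j ∧ i ≠ k ∧ j ≠ k ∧ fdist i j = 1 ∧ fdist i k = 1 ∧ fdist (σ j) (σ k) = 1

/-- `σ i` horizontally separates `σ j` from `σ k`. -/
def HSep {n : ℕ} (σ : Equiv.Perm (Fin n)) (i j k : Fin n) : Prop :=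
  i ≠ j ∧ i ≠ k ∧ j ≠ k ∧ fdist (σ i) (σ j) = 1 ∧ fdist (σ i) (σ k) = 1 ∧ fdist j k = 1

/-- `σ i` separates `σ j` from `σ k`. -/
def Separates {n : ℕ} (σ : Equiv.Perm (Fin n)) (i j k : Fin n) : Prop :=
  VSep σ i j k ∨ HSep σ i j k

/-- `π` has a 2-block at positions `j`, `j+1` (0-based). -/
def HasTwoBlockAt {n : ℕ} (π : Equiv.Perm (Fin n)) (j : ℕ) : Prop :=
  ∃ hj : j + 1 < n, fdist (π ⟨j, by omega⟩) (π ⟨j + 1, hj⟩) = 1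

/-- `π` has a 3-block at positions `p`, `p+1`, `p+2` (0-based). -/
def HasThreeBlockAt {n : ℕ} (π : Equiv.Perm (Fin n)) (p : ℕ) : Prop :=
  ∃ hp : p + 2 < n, ∃ m : ℕ,
    ({(π ⟨p, by omega⟩ : ℕ), (π ⟨p + 1, by omega⟩ : ℕ), (π ⟨p + 2, by omega⟩ : ℕ)} : Finset ℕ)
      = {m, m + 1, m + 2}

theorem fdist_comm {n : ℕ} (a b : Fin n) : fdist a b = fdist b a := by
  unfold fdist
  omega

theorem fdist_eq_one_iff {n : ℕ} {a b : Fin n} :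
    fdist a b = 1 ↔ (b : ℕ) = a + 1 ∨ (a : ℕ) = b + 1 := by
  unfold fdist
  omega

section

variable {n : ℕ} {σ : Equiv.Perm (Fin n)} {i j k k' : Fin n}

theorem VSep.fdist_eq_one (h : VSep σ i j k) : fdist i j = 1 :=
  h.2.2.2.1

theorem HSep.fdist_apply_eq_one (h : HSep σ i j k) : fdist (σ i) (σ j) = 1 :=
  h.2.2.2.1

theorem IsKing.fdist_apply_ne_one (hσ : IsKing σ) (h : fdist i j = 1) :
    fdist (σ i) (σ j) ≠ 1 := by
  rcases fdist_eq_one_iff.mp h with hji | hij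
  · exact hσ i j hji
  · rw [fdist_comm]
    exact hσ j i hij

theorem IsKing.not_hSep_of_vSep (hσ : IsKing σ) (hv : VSep σ i j k) : ¬HSep σ j i k' := fun hh ↦
  hσ.fdist_apply_ne_one hv.fdist_eq_one ((fdist_comm _ _).trans hh.fdist_apply_eq_one)

end

/-- mutual separators in a king permutation are of the same type. -/
theorem separators_same_type (n : ℕ) (σ : Equiv.Perm (Fin n)) (hσ : IsKing σ)
    (i j k k' : Fin n) (hij : i ≠ j)
    (h1 : Separates σ i j k) (h2 : Separates σ j i k') :
    (VSep σ i j k ∧ VSep σ j i k') ∨ (HSep σ i j k ∧ HSep σ j i k') := by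
  rcases h1 with hv | hh <;> rcases h2 with hv' | hh'
  · exact Or.inl ⟨hv, hv'⟩
  · exact absurd hh' (hσ.not_hSep_of_vSep hv)
  · exact absurd hh (hσ.not_hSep_of_vSep hv')
  · exact Or.inr ⟨hh, hh'⟩
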